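/- arXiv:2312.02547 — 9 statements merged into one kernel-verified Lean document; each statement's English description precedes it below -/
import Mathlib

section
/- Let δ ≥ e and s > 0 be real numbers, and define g(z) := δ^z/ln δ + (1−z)·δ^{z+s} for z ∈ ℝ. Then for every real z, g(z) ≤ (δ/(e·ln δ))·(e^{δ^{−s}}/δ^{−s}). Moreover, the maximum of g is attained at z₀ := 1 + (δ^{−s} − 1)/ln δ, where g(z₀) = (δ/(e·ln δ))·(e^{δ^{−s}}/δ^{−s}). -/
open Real

theorem g_factor (δ s z : ℝ) (hδ : Real.exp 1 ≤ δ) :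
    δ ^ z / Real.log δ + (1 - z) * δ ^ (z + s) =
      δ / (Real.exp 1 * Real.log δ) * (Real.exp (δ ^ (-s)) / δ ^ (-s)) *
        ((δ ^ (-s) + (1 - z) * Real.log δ) *
          Real.exp (1 - (δ ^ (-s) + (1 - z) * Real.log δ))) := by
  have hpos : 0 < δ := lt_of_lt_of_le (Real.exp_pos 1) hδ
  have hL : 0 < Real.log δ := by
    have := (Real.le_log_iff_exp_le hpos).2 hδ
    linarith
  have ha : 0 < δ ^ (-s) := Real.rpow_pos_of_pos hpos _
  have h1 : δ ^ (z + s) = δ ^ z / δ ^ (-s) := by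
    rw [← Real.rpow_sub hpos]; congr 1; ring
  have h2 : δ ^ z * Real.exp 1 = δ * Real.exp (δ ^ (-s)) *
      Real.exp (1 - (δ ^ (-s) + (1 - z) * Real.log δ)) := by
    rw [Real.rpow_def_of_pos hpos z]
    nth_rewrite 2 [← Real.exp_log hpos]
    rw [← Real.exp_add, ← Real.exp_add, ← Real.exp_add]
    congr 1; ring
  rw [h1]
  generalize Real.exp (1 - (δ ^ (-s) + (1 - z) * Real.log δ)) = E at *
  generalize δ ^ (-s) = a at *
  have he := Real.exp_pos 1
  have h3 : δ ^ z = δ * Real.exp a * E / Real.exp 1 := by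
    rw [← h2]; field_simp
  rw [h3]
  field_simp

theorem rand_rob_lemma_g (δ s : ℝ) (hδ : Real.exp 1 ≤ δ) (hs : 0 < s) :
    (∀ z : ℝ, δ ^ z / Real.log δ + (1 - z) * δ ^ (z + s) ≤
      δ / (Real.exp 1 * Real.log δ) * (Real.exp (δ ^ (-s)) / δ ^ (-s))) ∧
    (δ ^ (1 + (δ ^ (-s) - 1) / Real.log δ) / Real.log δ
        + (1 - (1 + (δ ^ (-s) - 1) / Real.log δ)) * δ ^ ((1 + (δ ^ (-s) - 1) / Real.log δ) + s)
      = δ / (Real.exp 1 * Real.log δ) * (Real.exp (δ ^ (-s)) / δ ^ (-s))) := by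
  have hpos : 0 < δ := lt_of_lt_of_le (Real.exp_pos 1) hδ
  have hL : 0 < Real.log δ := by
    have := (Real.le_log_iff_exp_le hpos).2 hδ
    linarith
  have ha : 0 < δ ^ (-s) := Real.rpow_pos_of_pos hpos _
  constructor
  · intro z
    rw [g_factor δ s z hδ]
    apply mul_le_of_le_one_right (by positivity)
    generalize δ ^ (-s) + (1 - z) * Real.log δ = u
    have h := Real.add_one_le_exp (u - 1)
    calc u * Real.exp (1 - u) ≤ Real.exp (u - 1) * Real.exp (1 - u) := by
          gcongr; linarith
      _ = 1 := by rw [← Real.exp_add]; simp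
  · rw [g_factor δ s _ hδ]
    have hu : δ ^ (-s) + (1 - (1 + (δ ^ (-s) - 1) / Real.log δ)) * Real.log δ = 1 := by
      field_simp; ring
    rw [hu]; simp
end

section
/- For every real z > 0, e^{z−1} − z² + z·ln z ≥ 0. -/
theorem exp_sub_sq_add_log_nonneg (z : ℝ) (hz : 0 < z) :
    Real.exp (z - 1) - z ^ 2 + z * Real.log z ≥ 0 := by
  have h1 : Real.exp (z - 1) = z * Real.exp (z - 1 - Real.log z) := by
    rw [Real.exp_sub (z - 1) (Real.log z), Real.exp_log hz]
    field_simp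
  have h2 := mul_le_mul_of_nonneg_left (Real.add_one_le_exp (z - 1 - Real.log z)) hz.le
  rw [h1]
  nlinarith [h2]
end

section
/- Let δ ≥ e and s > 0 be real numbers. Then δ^{1−s}/ln δ + s·δ ≤ (δ/(e·ln δ))·(e^{δ^{−s}}/δ^{−s}). -/
theorem rand_rob3_aux (z : ℝ) (h0 : 0 < z) (h1 : z ≤ 1) :
    z - Real.log z ≤ Real.exp (z - 1) / z := by
  have hd : ∀ x : ℝ, 0 < x → HasDerivAt (fun x : ℝ => Real.exp (x - 1) / x - x + Real.log x)
      ((Real.exp (x - 1) * 1 * x - Real.exp (x - 1) * 1) / x ^ 2 - 1 + x⁻¹) x := by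
    intro x hx
    have h1 : HasDerivAt (fun x : ℝ => Real.exp (x - 1)) (Real.exp (x - 1) * 1) x :=
      ((hasDerivAt_id x).sub_const 1).exp
    have h2 := h1.div (hasDerivAt_id x) hx.ne'
    exact (h2.sub (hasDerivAt_id x)).add (Real.hasDerivAt_log hx.ne')
  have hanti : AntitoneOn (fun x : ℝ => Real.exp (x - 1) / x - x + Real.log x) (Set.Ioc 0 1) := by
    apply antitoneOn_of_deriv_nonpos (convex_Ioc 0 1)
    · intro x hx
      exact (hd x hx.1).continuousAt.continuousWithinAt
    · intro x hx
      rw [interior_Ioc] at hx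
      exact (hd x hx.1).differentiableAt.differentiableWithinAt
    · intro x hx
      rw [interior_Ioc] at hx
      rw [(hd x hx.1).deriv]
      have hx0 : 0 < x := hx.1
      have e : (Real.exp (x - 1) * 1 * x - Real.exp (x - 1) * 1) / x ^ 2 - 1 + x⁻¹
          = -((1 - x) * (Real.exp (x - 1) - x) / x ^ 2) := by
        field_simp
        ring
      rw [e]
      have h3 := Real.add_one_le_exp (x - 1)
      have h4 : 0 ≤ 1 - x := by linarith [hx.2]
      have h5 : 0 ≤ Real.exp (x - 1) - x := by linarith
      have : 0 ≤ (1 - x) * (Real.exp (x - 1) - x) / x ^ 2 := by positivity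
      linarith
  have := hanti ⟨h0, h1⟩ (Set.right_mem_Ioc.2 one_pos) h1
  simp at this
  linarith

theorem rand_rob3_final (δ s : ℝ) (hδ : Real.exp 1 ≤ δ) (hs : 0 < s) :
    δ ^ (1 - s) / Real.log δ + s * δ ≤
      δ / (Real.exp 1 * Real.log δ) * (Real.exp (δ ^ (-s)) / δ ^ (-s)) := by
  have hpos : 0 < δ := (Real.exp_pos 1).trans_le hδ
  have hL : 1 ≤ Real.log δ := (Real.le_log_iff_exp_le hpos).2 hδ
  have hL0 : 0 < Real.log δ := by linarith
  have hz0 : 0 < δ ^ (-s) := Real.rpow_pos_of_pos hpos _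
  have hlog : Real.log (δ ^ (-s)) = -s * Real.log δ := Real.log_rpow hpos _
  have hz1 : δ ^ (-s) ≤ 1 := by
    rw [← Real.log_nonpos_iff hz0.le, hlog]
    nlinarith
  have e1 : δ ^ (1 - s) = δ * δ ^ (-s) := by
    rw [sub_eq_add_neg, Real.rpow_add hpos, Real.rpow_one]
  have key := rand_rob3_aux _ hz0 hz1
  rw [hlog, Real.exp_sub] at key
  rw [e1]
  generalize δ ^ (-s) = z at *
  have h := mul_le_mul_of_nonneg_left key (div_pos hpos hL0).le
  have hE := Real.exp_pos 1
  calc _ = δ / Real.log δ * (z - -s * Real.log δ) := by field_simp; ring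
    _ ≤ _ := h
    _ = _ := by field_simp
end

section
/- Let δ ≥ e be a real number. Then for every z ∈ [1/δ, 1], δ·e^z − e·(δ+1)·z + e·ln z + e ≥ 0. -/
theorem rr_log_aux (z : ℝ) (hz : Real.exp (-1) ≤ z) (h1 : z ≤ 1) :
    -(1 - z) - (1 - z) ^ 2 ≤ Real.log z := by
  have hz0 : 0 < z := lt_of_lt_of_le (Real.exp_pos _) hz
  rcases le_total (1 / 2) z with h | h
  · have hs := Real.self_le_sinh_iff.2 (show 0 ≤ -Real.log z by
      have := Real.log_nonpos hz0.le h1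
      linarith)
    rw [Real.sinh_neg, Real.sinh_log hz0] at hs
    have : (z⁻¹ - z) / 2 ≤ (1 - z) + (1 - z) ^ 2 := by
      have e : (1 - z) + (1 - z) ^ 2 - (z⁻¹ - z) / 2 = (1 - z) ^ 2 * (2 * z - 1) / (2 * z) := by
        field_simp
        ring
      have : 0 ≤ (1 - z) ^ 2 * (2 * z - 1) / (2 * z) :=
        div_nonneg (mul_nonneg (sq_nonneg _) (by linarith)) (by linarith)
      linarith
    linarith
  · have hl := Real.one_sub_inv_le_log_of_pos (mul_pos (Real.exp_pos 1) hz0)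
    rw [Real.log_mul (Real.exp_pos 1).ne' hz0.ne', Real.log_exp] at hl
    have he := Real.exp_one_gt_d9
    have he2 := Real.exp_one_lt_d9
    have hz1 : 0.36 ≤ z := by
      rw [Real.exp_neg] at hz
      have : (0.36 : ℝ) ≤ (Real.exp 1)⁻¹ := by
        rw [le_inv_comm₀ (by norm_num) (by linarith)]
        norm_num
        linarith
      linarith
    have hp : 0.37 ≤ z * ((1 - z) + (1 - z) ^ 2) := by
      nlinarith [mul_nonneg (sub_nonneg.2 hz1) (sub_nonneg.2 h),
        mul_nonneg (mul_nonneg (sub_nonneg.2 hz1) (sub_nonneg.2 h)) hz0.le]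
    have : (Real.exp 1 * z)⁻¹ ≤ (1 - z) + (1 - z) ^ 2 := by
      rw [inv_le_iff_one_le_mul₀ (mul_pos (Real.exp_pos 1) hz0)]
      nlinarith
    linarith

theorem rr_exp_aux (t : ℝ) (h0 : 0 ≤ t) (h1 : t ≤ 0.64) :
    1 - t + t ^ 2 / 2.7 ≤ Real.exp (-t) := by
  have h := Real.exp_bound (x := -t) (by rw [abs_neg, abs_of_nonneg h0]; linarith)
    (n := 4) (by norm_num)
  rw [abs_neg, abs_of_nonneg h0] at h
  have h := (abs_le.1 h).1
  norm_num [Finset.sum_range_succ, Nat.factorial] at h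
  have : 0 ≤ t ^ 2 * (1 / 2 - 1 / 2.7 - t / 6 - t ^ 2 * (5 / 96)) :=
    mul_nonneg (sq_nonneg _) (by norm_num; nlinarith)
  norm_num at this ⊢
  nlinarith [pow_nonneg h0 4]

theorem rand_rob4_2_substituted (δ : ℝ) (hδ : Real.exp 1 ≤ δ) :
    ∀ z ∈ Set.Icc (1 / δ) 1,
      δ * Real.exp z - Real.exp 1 * (δ + 1) * z + Real.exp 1 * Real.log z + Real.exp 1 ≥ 0 := by
  rintro z ⟨hz, h1⟩
  have he := Real.exp_one_gt_d9
  have he2 := Real.exp_one_lt_d9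
  have hδ0 : 0 < δ := by linarith
  have hz0 : 0 < z := lt_of_lt_of_le (by positivity) hz
  have hdz : 1 ≤ δ * z := by
    rw [div_le_iff₀ hδ0] at hz
    linarith
  have hexp : Real.exp z = Real.exp 1 * Real.exp (-(1 - z)) := by
    rw [← Real.exp_add]
    ring_nf
  have hA : 0 ≤ Real.exp z - Real.exp 1 * z := by
    rw [hexp]
    nlinarith [Real.add_one_le_exp (-(1 - z))]
  rcases le_total (Real.exp (-1)) z with h | h
  · have hl := rr_log_aux z h h1
    have hz1 : 0.36 ≤ z := by
      rw [Real.exp_neg] at h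
      have : (0.36 : ℝ) ≤ (Real.exp 1)⁻¹ := by
        rw [le_inv_comm₀ (by norm_num) (by linarith)]
        norm_num
        linarith
      linarith
    have hx := rr_exp_aux (1 - z) (by linarith) (by linarith)
    have hB : (1 - z) ^ 2 ≤ Real.exp z - Real.exp 1 * z := by
      rw [hexp]
      have : (1 - z) ^ 2 / 2.7 ≤ Real.exp (-(1 - z)) - z := by linarith
      rw [div_le_iff₀ (by norm_num)] at this
      nlinarith [sq_nonneg (1 - z)]
    have h2 : Real.exp 1 * (Real.exp z - Real.exp 1 * z) ≤ δ * (Real.exp z - Real.exp 1 * z) :=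
      mul_le_mul_of_nonneg_right hδ hA
    have h3 : 0 ≤ Real.exp 1 * ((Real.exp z - Real.exp 1 * z) + (1 - z + Real.log z)) :=
      mul_nonneg (Real.exp_pos 1).le (by linarith)
    linarith
  · have hez : Real.exp 1 * z ≤ 1 := by
      rw [Real.exp_neg] at h
      calc Real.exp 1 * z ≤ Real.exp 1 * (Real.exp 1)⁻¹ :=
            mul_le_mul_of_nonneg_left h (Real.exp_pos 1).le
        _ = 1 := mul_inv_cancel₀ (Real.exp_pos 1).ne'
    have hq := Real.quadratic_le_exp_of_nonneg hz0.le
    have hl := Real.one_sub_inv_le_log_of_pos (mul_pos (Real.exp_pos 1) hz0)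
    rw [Real.log_mul (Real.exp_pos 1).ne' hz0.ne', Real.log_exp] at hl
    have hl2 : -1 ≤ Real.exp 1 * z * Real.log z := by
      have := mul_le_mul_of_nonneg_left hl (mul_pos (Real.exp_pos 1) hz0).le
      rw [mul_sub, mul_inv_cancel₀ (mul_pos (Real.exp_pos 1) hz0).ne'] at this
      linarith
    have h2 : Real.exp z - Real.exp 1 * z ≤ δ * z * (Real.exp z - Real.exp 1 * z) :=
      le_mul_of_one_le_left hA hdz
    have h3 : Real.exp 1 * z * z ≤ z := by nlinarith
    have h4 : 0 ≤ z * (δ * Real.exp z - Real.exp 1 * (δ + 1) * z + Real.exp 1 * Real.log z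
        + Real.exp 1) := by
      nlinarith [sq_nonneg z]
    exact nonneg_of_mul_nonneg_right h4 hz0
end

section
/- Let δ ≥ e be a real number and let s be a real number with 0 ≤ s ≤ 1. Then (δ+1)/ln δ + s·δ^s − δ^s/ln δ ≤ (δ/(e·ln δ))·(e^{δ^{−s}}/δ^{−s}). -/
lemma aux_log (t : ℝ) (h0 : 0 ≤ t) (h1 : t ≤ 0.633) : -t - t ^ 2 ≤ Real.log (1 - t) := by
  rcases le_total t 0.5 with h | h
  · have h2 := Real.abs_log_sub_add_sum_range_le (x := t) (by rw [abs_of_nonneg h0]; linarith) 4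
    rw [abs_of_nonneg h0] at h2
    have h3 := (abs_le.1 h2).1
    norm_num [Finset.sum_range_succ] at h3
    have h4 : t ^ 5 / (1 - t) ≤ t ^ 2 / 4 := by
      rw [div_le_iff₀ (by linarith)]
      have e1 : t ^ 3 ≤ 0.5 ^ 3 := by gcongr
      nlinarith [mul_le_mul_of_nonneg_left e1 (sq_nonneg t), sq_nonneg t]
    have h5 : t ^ 3 / 3 + t ^ 4 / 4 ≤ t ^ 2 / 4 := by
      nlinarith [mul_nonneg (sq_nonneg t) (by linarith : 0 ≤ 0.5 - t),
        mul_nonneg (sq_nonneg t) (mul_nonneg h0 (by linarith : 0 ≤ 0.5 - t))]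
    linarith
  · have hp : 0 < 1 - t := by linarith
    have he := Real.exp_one_gt_d9
    have hq : 0 < Real.exp 1 * (1 - t) := by positivity
    have h2 := Real.one_sub_inv_le_log_of_pos hq
    rw [Real.log_mul (by positivity) hp.ne', Real.log_exp] at h2
    have h3 : (Real.exp 1 * (1 - t))⁻¹ ≤ t + t ^ 2 := by
      rw [inv_le_iff_one_le_mul₀ hq]
      have h4 : 0.374 ≤ (t + t ^ 2) * (1 - t) := by
        nlinarith [mul_nonneg (by linarith : 0 ≤ t - 0.5) (by linarith : 0 ≤ 0.633 - t),
          mul_nonneg h0 (mul_nonneg (by linarith : 0 ≤ t - 0.5) (by linarith : 0 ≤ 0.633 - t))]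
      nlinarith
    linarith

lemma aux_exp (t : ℝ) (h0 : 0 ≤ t) (h1 : t ≤ 0.633) :
    1 - t + 0.37 * t ^ 2 ≤ Real.exp (-t) := by
  have h2 := Real.exp_bound (x := -t) (by rw [abs_neg, abs_of_nonneg h0]; linarith)
    (n := 5) (by norm_num)
  rw [abs_neg, abs_of_nonneg h0] at h2
  have h3 := (abs_le.1 h2).1
  norm_num [Finset.sum_range_succ, Nat.factorial] at h3
  have e1 : 0 ≤ t ^ 2 * (0.633 - t) := mul_nonneg (sq_nonneg t) (by linarith)
  have e2 : 0 ≤ t ^ 4 * (0.633 - t) := mul_nonneg (by positivity) (by linarith)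
  have e3 : 0 ≤ t ^ 4 := by positivity
  nlinarith [sq_nonneg t]

lemma aux_small (y : ℝ) (h1 : 1 ≤ y) (h2 : y ≤ Real.exp 1) :
    1 + Real.exp 1 + y * Real.log y - y ≤ y * Real.exp (1 / y) := by
  have hy : 0 < y := by linarith
  have he := Real.exp_one_gt_d9
  have he' := Real.exp_one_lt_d9
  obtain ⟨t, ht⟩ : ∃ t, t = 1 - 1 / y := ⟨_, rfl⟩
  have hx1 : 1 / y ≤ 1 := by rw [div_le_one hy]; exact h1
  have hx2 : 0.367 ≤ 1 / y := by rw [le_div_iff₀ hy]; nlinarith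
  have h0 : 0 ≤ t := by linarith
  have h3 : t ≤ 0.633 := by linarith
  have hl := aux_log t h0 h3
  have hE := aux_exp t h0 h3
  have hx : 1 / y = 1 - t := by linarith
  have hxe : Real.exp (1 / y) = Real.exp 1 * Real.exp (-t) := by
    rw [← Real.exp_add, hx]; ring_nf
  have hlog : Real.log (1 - t) = - Real.log y := by rw [← hx]; simp
  rw [hlog] at hl
  have hyt : y * (1 - t) = 1 := by rw [← hx]; field_simp
  have key : (1 + Real.exp 1) * (1 - t) + Real.log y - 1 ≤ Real.exp (1 / y) := by
    rw [hxe]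
    have := mul_le_mul_of_nonneg_left hE (by positivity : 0 ≤ Real.exp 1)
    nlinarith [mul_nonneg (by linarith : 0 ≤ 0.37 * Real.exp 1 - 1) (sq_nonneg t)]
  have := mul_le_mul_of_nonneg_left key hy.le
  have e : y * ((1 + Real.exp 1) * (1 - t) + Real.log y - 1)
    = (1 + Real.exp 1) * (y * (1 - t)) + y * Real.log y - y := by ring
  rw [e, hyt] at this
  linarith

lemma aux_main (δ y : ℝ) (hδ : Real.exp 1 ≤ δ) (h1 : 1 ≤ y) (h2 : y ≤ δ) :
    δ + 1 + y * Real.log y - y ≤ δ * (y * Real.exp (1 / y) / Real.exp 1) := by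
  have hy : 0 < y := by linarith
  have hp := Real.exp_pos 1
  obtain ⟨A, hA⟩ : ∃ A, A = y * Real.exp (1 / y) / Real.exp 1 := ⟨_, rfl⟩
  have hAe : A * Real.exp 1 = y * Real.exp (1 / y) := by rw [hA]; field_simp
  have hA1 : 1 ≤ A := by
    have := Real.add_one_le_exp (1 / y - 1)
    have h3 : A = y * Real.exp (1 / y - 1) := by rw [hA, Real.exp_sub]; ring
    have h4 : y * (1 / y) = 1 := by field_simp
    nlinarith
  rw [← hA]
  rcases le_total y (Real.exp 1) with h | h
  · have := aux_small y h1 h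
    nlinarith [mul_nonneg (sub_nonneg.2 hδ) (sub_nonneg.2 hA1)]
  · have hb : y + 1 ≤ A * Real.exp 1 := by
      rw [hAe]
      have := mul_le_mul_of_nonneg_left (Real.add_one_le_exp (1 / y)) hy.le
      have h4 : y * (1 / y) = 1 := by field_simp
      nlinarith
    have hl : Real.log y ≤ y / Real.exp 1 := by
      have := Real.log_le_sub_one_of_pos (div_pos hy hp)
      rw [Real.log_div hy.ne' hp.ne', Real.log_exp] at this
      linarith
    have hb' : y / Real.exp 1 + 1 / Real.exp 1 ≤ A := by
      rw [← add_div, div_le_iff₀ hp]; exact hb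
    have hye : 1 ≤ y * (1 / Real.exp 1) := by
      rw [mul_one_div, le_div_iff₀ hp]; linarith
    nlinarith [mul_nonneg (sub_nonneg.2 h2) (sub_nonneg.2 hA1),
      mul_le_mul_of_nonneg_left hb' hy.le, mul_le_mul_of_nonneg_left hl hy.le]

theorem rand_rob4_2 (δ s : ℝ) (hδ : Real.exp 1 ≤ δ) (hs0 : 0 ≤ s) (hs1 : s ≤ 1) :
    (δ + 1) / Real.log δ + s * δ ^ s - δ ^ s / Real.log δ ≤
      δ / (Real.exp 1 * Real.log δ) * (Real.exp (δ ^ (-s)) / δ ^ (-s)) := by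
  have he := Real.exp_one_gt_d9
  have hd : 0 < δ := by linarith
  have hL : 0 < Real.log δ := Real.log_pos (by linarith)
  have h1 : 1 ≤ δ ^ s := Real.one_le_rpow (by linarith) hs0
  have h2 : δ ^ s ≤ δ := by
    simpa using Real.rpow_le_rpow_of_exponent_le (by linarith : 1 ≤ δ) hs1
  have h := aux_main δ (δ ^ s) hδ h1 h2
  rw [Real.log_rpow hd] at h
  rw [Real.rpow_neg hd.le]
  have hy : 0 < δ ^ s := by linarith
  generalize δ ^ s = y at *
  rw [one_div] at h
  have e1 : (δ + 1) / Real.log δ + s * y - y / Real.log δ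
    = (δ + 1 + y * (s * Real.log δ) - y) / Real.log δ := by field_simp
  have e2 : δ / (Real.exp 1 * Real.log δ) * (Real.exp y⁻¹ / y⁻¹)
    = (δ * (y * Real.exp y⁻¹ / Real.exp 1)) / Real.log δ := by field_simp
  rw [e1, e2]
  gcongr
end

section
/- Let δ ≥ e be a real number. Then for every z ∈ (0, 1], δ·e^z + e·z·ln z − e·z² − e·(δ−1)·z ≥ 0. -/
theorem rand_rob5_aux (z : ℝ) (h0 : 0 < z) (h1 : z ≤ 1) :
    (1 - z) ^ 2 ≤ Real.exp z - Real.exp 1 * z := by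
  have e1 := Real.exp_one_gt_d9
  have e2 := Real.exp_one_lt_d9
  rcases le_total z (1 / 2) with h | h
  · have hq := Real.quadratic_le_exp_of_nonneg h0.le
    have : 0 ≤ z * ((3 - Real.exp 1) - z / 2) := by
      apply mul_nonneg h0.le
      linarith
    nlinarith
  · obtain ⟨t, rfl⟩ : ∃ t, z = 1 - t := ⟨1 - z, by ring⟩
    have ht0 : 0 ≤ t := by linarith
    have ht : t ≤ 1 / 2 := by linarith
    have habs : |(-t)| = t := by rw [abs_neg, abs_of_nonneg ht0]
    have hb := Real.exp_bound (x := -t) (by rw [habs]; linarith) (n := 4) (by norm_num)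
    rw [habs] at hb
    have hb2 := (abs_le.1 hb).1
    simp [Finset.sum_range_succ, Nat.factorial] at hb2
    have hk : 1 - t + 19 / 50 * t ^ 2 ≤ Real.exp (-t) := by
      have h3 : 0 ≤ t ^ 2 * (1 / 2 - 19 / 50 - t / 6 - 5 / 96 * t ^ 2) := by
        apply mul_nonneg (sq_nonneg t)
        nlinarith
      nlinarith
    have he : Real.exp (1 - t) = Real.exp 1 * Real.exp (-t) := by
      rw [← Real.exp_add]; ring_nf
    rw [he]
    have := mul_le_mul_of_nonneg_left hk (Real.exp_pos 1).le
    nlinarith [sq_nonneg t]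

theorem rand_rob5_substituted (δ : ℝ) (hδ : Real.exp 1 ≤ δ) :
    ∀ z ∈ Set.Ioc (0 : ℝ) 1,
      δ * Real.exp z + Real.exp 1 * z * Real.log z - Real.exp 1 * z ^ 2
        - Real.exp 1 * (δ - 1) * z ≥ 0 := by
  rintro z ⟨h0, h1⟩
  have ha := rand_rob5_aux z h0 h1
  have hl : z - 1 ≤ z * Real.log z := by
    have := mul_le_mul_of_nonneg_left (Real.one_sub_inv_le_log_of_pos h0) h0.le
    rwa [mul_sub, mul_inv_cancel₀ h0.ne', mul_one] at this
  have he := Real.exp_pos 1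
  have A := mul_le_mul_of_nonneg_left hl he.le
  have B := mul_le_mul_of_nonneg_left ha he.le
  have C := mul_nonneg (sub_nonneg.2 hδ) ((sq_nonneg (1 - z)).trans ha)
  nlinarith
end

section
/- Let δ ≥ e and s ≥ 0 be real numbers. Then (δ + δ^{−s} + min(s,1)·ln δ − 1)/ln δ ≤ (δ/(e·ln δ))·(e^{δ^{−s}}/δ^{−s}). -/
theorem rand_rob5 (δ s : ℝ) (hδ : Real.exp 1 ≤ δ) (hs : 0 ≤ s) :
    (δ + δ ^ (-s) + min s 1 * Real.log δ - 1) / Real.log δ ≤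
      δ / (Real.exp 1 * Real.log δ) * (Real.exp (δ ^ (-s)) / δ ^ (-s)) := by
  have h1 : (1 : ℝ) < Real.exp 1 := by
    have := Real.add_one_lt_exp (x := 1) one_ne_zero
    linarith
  have hd1 : 1 < δ := lt_of_lt_of_le h1 hδ
  have hd : 0 < δ := by linarith
  have hL : 0 < Real.log δ := Real.log_pos hd1
  have ht : 0 < δ ^ (-s) := Real.rpow_pos_of_pos hd _
  have hlog : Real.log (δ ^ (-s)) = -s * Real.log δ := Real.log_rpow hd _
  have hm : min s 1 * Real.log δ ≤ s * Real.log δ :=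
    mul_le_mul_of_nonneg_right (min_le_left _ _) hL.le
  generalize δ ^ (-s) = t at *
  have hw : 0 ≤ t - 1 - Real.log t := by
    have := Real.log_le_sub_one_of_pos ht
    linarith
  have he := Real.add_one_le_exp (t - 1 - Real.log t)
  have hE : Real.exp (t - 1 - Real.log t) = Real.exp t / Real.exp 1 / t := by
    rw [Real.exp_sub, Real.exp_sub, Real.exp_log ht]
  have hR : δ / (Real.exp 1 * Real.log δ) * (Real.exp t / t)
      = δ * Real.exp (t - 1 - Real.log t) / Real.log δ := by
    rw [hE]
    field_simp
  rw [hR]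
  apply div_le_div_of_nonneg_right _ hL.le
  have h2 : t + min s 1 * Real.log δ - 1 ≤ t - 1 - Real.log t := by
    rw [hlog]; linarith
  nlinarith [mul_le_mul_of_nonneg_left he hd.le, mul_nonneg (sub_nonneg.2 hd1.le) hw]
end

section
/- Let J be a positive integer, let λ ∈ (0,1), and let ℓ := ⌈2λJ/(1+λ)⌉. Define u_t := J·(J−t) for t = 1,…,J, v̂ := J − ℓ, and v_{j} := 1 if 1 ≤ j ≤ ℓ and v_j := 0 if ℓ < j ≤ J. Then for all integers t, j with 1 ≤ t < j ≤ J, we have u_t − u_j ≤ j·(v̂ + ∑_{j'=t+1}^{J} v_{j'}). -/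
theorem button_dual_feas_1 (J : ℕ) (hJ : 0 < J) (lam : ℝ) (h0 : 0 < lam) (h1 : lam < 1)
    (ℓ : ℕ) (hℓ : ℓ = ⌈2 * lam * J / (1 + lam)⌉₊)
    (u : ℕ → ℝ) (hu : ∀ t, u t = (J : ℝ) * ((J : ℝ) - (t : ℝ)))
    (vhat : ℝ) (hvhat : vhat = (J : ℝ) - (ℓ : ℝ))
    (v : ℕ → ℝ) (hv : ∀ j, v j = if j ≤ ℓ then (1 : ℝ) else 0) :
    ∀ t j : ℕ, 1 ≤ t → t < j → j ≤ J →
      u t - u j ≤ (j : ℝ) * (vhat + ∑ j' ∈ Finset.Icc (t + 1) J, v j') := by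
  intro t j ht htj hjJ
  have hJ' : (0 : ℝ) < J := by exact_mod_cast hJ
  have hlJ : ℓ ≤ J := by
    rw [hℓ]
    apply Nat.ceil_le.mpr
    rw [div_le_iff₀ (by linarith)]
    nlinarith
  have hnn : ∀ i, 0 ≤ v i := by
    intro i
    rw [hv]
    split_ifs <;> norm_num
  have hsum : (ℓ : ℝ) - t ≤ ∑ j' ∈ Finset.Icc (t + 1) J, v j' := by
    rcases le_total ℓ t with h | h
    · have h1 : (ℓ : ℝ) ≤ t := by exact_mod_cast h
      have h2 := Finset.sum_nonneg (s := Finset.Icc (t + 1) J) (fun i _ => hnn i)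
      linarith
    · have h2 : ∑ j' ∈ Finset.Icc (t + 1) ℓ, v j' = (ℓ : ℝ) - t := by
        rw [Finset.sum_congr rfl (g := fun _ => (1 : ℝ))
          (fun i hi => by rw [hv, if_pos (Finset.mem_Icc.mp hi).2])]
        simp [Nat.cast_sub h]
      rw [← h2]
      exact Finset.sum_le_sum_of_subset_of_nonneg
        (Finset.Icc_subset_Icc_right hlJ) (fun i _ _ => hnn i)
  have hj : (j : ℝ) ≤ J := by exact_mod_cast hjJ
  have h3 : (j : ℝ) * ((J : ℝ) - t)
      ≤ (j : ℝ) * (vhat + ∑ j' ∈ Finset.Icc (t + 1) J, v j') := by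
    apply mul_le_mul_of_nonneg_left _ (Nat.cast_nonneg j)
    rw [hvhat]
    linarith
  rw [hu, hu]
  have h4 := mul_le_mul_of_nonneg_right hj (Nat.cast_nonneg (α := ℝ) t)
  linarith
end

section
/- Let J be a positive integer, let λ ∈ (0,1), and let ℓ := ⌈2λJ/(1+λ)⌉. Then (J² − (1+λ)·J·(J−ℓ)) / (ℓ(ℓ+1)/2) ≥ λJ² / ((2λJ/(1+λ) + 1)·(λJ/(1+λ) + 1)). -/
theorem button_dual_value (J : ℕ) (hJ : 0 < J) (lam : ℝ) (h0 : 0 < lam) (h1 : lam < 1)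
    (ℓ : ℕ) (hℓ : ℓ = ⌈2 * lam * J / (1 + lam)⌉₊) :
    ((J : ℝ) ^ 2 - (1 + lam) * (J : ℝ) * ((J : ℝ) - (ℓ : ℝ))) /
        ((ℓ : ℝ) * ((ℓ : ℝ) + 1) / 2) ≥
      lam * (J : ℝ) ^ 2 /
        ((2 * lam * J / (1 + lam) + 1) * (lam * J / (1 + lam) + 1)) := by
  have hJ' : (0 : ℝ) < J := by exact_mod_cast hJ
  have hp : 0 < 1 + lam := by linarith
  have hx : 0 < 2 * lam * J / (1 + lam) := by positivity
  have hle : 2 * lam * J / (1 + lam) ≤ (ℓ : ℝ) := by rw [hℓ]; exact Nat.le_ceil _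
  have hlt : (ℓ : ℝ) < 2 * lam * J / (1 + lam) + 1 := by
    rw [hℓ]; exact Nat.ceil_lt_add_one hx.le
  have hhalf : lam * J / (1 + lam) = (2 * lam * J / (1 + lam)) / 2 := by ring
  have hm : 2 * lam * J ≤ ℓ * (1 + lam) := (div_le_iff₀ hp).1 hle
  rw [hhalf]
  generalize 2 * lam * (J : ℝ) / (1 + lam) = x at *
  have hl : (0 : ℝ) < ℓ := by linarith
  have hnum : lam * (J : ℝ) ^ 2 ≤
      (J : ℝ) ^ 2 - (1 + lam) * (J : ℝ) * ((J : ℝ) - (ℓ : ℝ)) := by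
    nlinarith [mul_le_mul_of_nonneg_left hm hJ'.le]
  have hn0 : 0 ≤ lam * (J : ℝ) ^ 2 := by positivity
  apply div_le_div₀ (hn0.trans hnum) hnum (by positivity)
  nlinarith
end
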